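/- The canonical surjection φ : Ad(Q_W) → W, e_x ↦ x, restricts to a group isomorphism from the commutator subgroup [Ad(Q_W), Ad(Q_W)] onto the commutator subgroup [W, W]; that is, φ maps [Ad(Q_W), Ad(Q_W)] onto [W,W] and is injective on [Ad(Q_W), Ad(Q_W)]. -/

import Mathlib

open Quandles Rack CoxeterSystem

variable {B : Type} [Fintype B] {W : Type} [Group W] {M : CoxeterMatrix B}

/-- The Coxeter quandle `Q_W`: the set of reflections of `W`, with operation given by
conjugation. (Since reflections are involutions, `x ◃ y = x y x⁻¹ = x⁻¹ y x`.) -/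
def CoxeterQuandle (cs : CoxeterSystem M W) : Type := {w : W // cs.IsReflection w}

instance (cs : CoxeterSystem M W) : Quandle (CoxeterQuandle cs) where
  act x y := ⟨x.1 * y.1 * x.1⁻¹, y.2.conj x.1⟩
  self_distrib := by
    rintro ⟨x, _⟩ ⟨y, _⟩ ⟨z, _⟩
    apply Subtype.ext
    show x * (y * z * y⁻¹) * x⁻¹ = (x * y * x⁻¹) * (x * z * x⁻¹) * (x * y * x⁻¹)⁻¹
    group
  invAct x y := ⟨x.1⁻¹ * y.1 * x.1, by simpa using y.2.conj x.1⁻¹⟩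
  left_inv := by
    rintro ⟨x, _⟩ ⟨y, _⟩
    apply Subtype.ext
    show x⁻¹ * (x * y * x⁻¹) * x = y
    group
  right_inv := by
    rintro ⟨x, _⟩ ⟨y, _⟩
    apply Subtype.ext
    show x * (x⁻¹ * y * x) * x⁻¹ = y
    group
  fix := by
    rintro ⟨x, hx⟩
    apply Subtype.ext
    show x * x * x⁻¹ = x
    group

/-- The canonical generator `e_x` of the adjoint (enveloping) group `Ad(Q_W)` of the
Coxeter quandle, associated with the reflection `x`. -/
def coxE (cs : CoxeterSystem M W) (x : CoxeterQuandle cs) :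
    EnvelGroup (CoxeterQuandle cs) :=
  Rack.toEnvelGroup (CoxeterQuandle cs) x

section
variable (cs : CoxeterSystem M W)

theorem coxE_act (x y : CoxeterQuandle cs) :
    coxE cs (x ◃ y) = coxE cs x * coxE cs y * (coxE cs x)⁻¹ :=
  ShelfHom.map_act (Rack.toEnvelGroup (CoxeterQuandle cs)) 

theorem coxE_induct (H : Subgroup (EnvelGroup (CoxeterQuandle cs)))
    (h : ∀ x, coxE cs x ∈ H) (g) : g ∈ H := by
  induction g using Quotient.inductionOn with
  | _ a =>
    induction a with
    | unit => exact H.one_mem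
    | incl x => exact h x
    | mul a b ha hb => exact H.mul_mem ha hb
    | inv a ha => exact H.inv_mem ha

theorem coxE_ext {K : Type*} [Group K] (f g : EnvelGroup (CoxeterQuandle cs) →* K)
    (h : ∀ x, f (coxE cs x) = g (coxE cs x)) : f = g := by
  ext a
  exact coxE_induct cs (MonoidHom.eqLocus f g) h a

theorem coxE_conj_mem (φ : EnvelGroup (CoxeterQuandle cs) →* W)
    (hφ : ∀ x : CoxeterQuandle cs, φ (coxE cs x) = x.1) (g) :
    ∀ x : CoxeterQuandle cs,
      g * coxE cs x * g⁻¹ = coxE cs ⟨φ g * x.1 * (φ g)⁻¹, x.2.conj _⟩ := by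
  let H : Subgroup (EnvelGroup (CoxeterQuandle cs)) :=
    { carrier := {g | ∀ x : CoxeterQuandle cs,
        g * coxE cs x * g⁻¹ = coxE cs ⟨φ g * x.1 * (φ g)⁻¹, x.2.conj _⟩}
      one_mem' := by
        intro x
        simp
        rfl
      mul_mem' := by
        intro a b ha hb x
        have : a * b * coxE cs x * (a * b)⁻¹ = a * (b * coxE cs x * b⁻¹) * a⁻¹ := by group
        rw [this, hb x]
        refine (ha _).trans ?_
        congr 1
        apply Subtype.ext
        simp [mul_assoc]
      inv_mem' := by
        intro a ha x
        have := ha ⟨φ a⁻¹ * x.1 * (φ a⁻¹)⁻¹, x.2.conj _⟩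
        have e : (⟨φ a * (φ a⁻¹ * x.1 * (φ a⁻¹)⁻¹) * (φ a)⁻¹, (x.2.conj _).conj _⟩ :
            CoxeterQuandle cs) = x := by
          apply Subtype.ext
          simp [mul_assoc]
        rw [e] at this
        rw [← this]
        group }
  refine coxE_induct cs H ?_ g
  intro y x
  rw [← coxE_act]
  congr 1
  apply Subtype.ext
  simp only [hφ]
  rfl

theorem coxE_sq_center (x : CoxeterQuandle cs) :
    coxE cs x ^ 2 ∈ Subgroup.center (EnvelGroup (CoxeterQuandle cs)) := by
  rw [Subgroup.mem_center_iff]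
  intro g
  have := coxE_induct cs (Subgroup.centralizer {coxE cs x ^ 2}) (fun y => ?_) g
  · exact (Subgroup.mem_centralizer_singleton_iff.1 this)
  · rw [Subgroup.mem_centralizer_singleton_iff]
    have h : x ◃ (x ◃ y) = y := by
      apply Subtype.ext
      show x.1 * (x.1 * y.1 * x.1⁻¹) * x.1⁻¹ = y.1
      have := x.2.mul_self
      rw [x.2.inv]
      calc _ = (x.1 * x.1) * y.1 * (x.1 * x.1) := by group
        _ = _ := by rw [this]; simp
    have h2 := congrArg (coxE cs) h
    rw [coxE_act, coxE_act] at h2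
    nth_rewrite 1 [← h2]
    rw [pow_two]
    group

abbrev CoxK : Type := Set.range (fun x : CoxeterQuandle cs => ConjClasses.mk x.1)

def coxK (x : CoxeterQuandle cs) : CoxK cs := ⟨ConjClasses.mk x.1, x, rfl⟩

noncomputable def coxRep (k : CoxK cs) : CoxeterQuandle cs := k.2.choose

theorem coxK_rep (k : CoxK cs) : coxK cs (coxRep cs k) = k := Subtype.ext k.2.choose_spec

noncomputable def coxCls (k : CoxK cs) :
    Subgroup.center (EnvelGroup (CoxeterQuandle cs)) :=
  ⟨coxE cs (coxRep cs k) ^ 2, coxE_sq_center cs _⟩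

theorem coxCls_mk (φ : EnvelGroup (CoxeterQuandle cs) →* W)
    (hφ : ∀ x : CoxeterQuandle cs, φ (coxE cs x) = x.1) (hs : Function.Surjective φ)
    (x : CoxeterQuandle cs) : (coxCls cs (coxK cs x)).1 = coxE cs x ^ 2 := by
  have h2 := congrArg Subtype.val (coxK_rep cs (coxK cs x))
  show coxE cs (coxRep cs (coxK cs x)) ^ 2 = _
  set y := coxRep cs (coxK cs x)
  change ConjClasses.mk y.1 = ConjClasses.mk x.1 at h2
  rw [ConjClasses.mk_eq_mk_iff_isConj, isConj_iff] at h2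
  obtain ⟨w, hw⟩ := h2
  obtain ⟨g, rfl⟩ := hs w
  have h3 := coxE_conj_mem cs φ hφ g y
  have e : (⟨φ g * y.1 * (φ g)⁻¹, y.2.conj _⟩ : CoxeterQuandle cs) = x := Subtype.ext hw
  rw [e] at h3
  rw [← h3, conj_pow, (Subgroup.mem_center_iff.1 (coxE_sq_center cs y) g)]
  group

instance coxCenterComm (G : Type) [Group G] : CommGroup (Subgroup.center G) :=
  { (inferInstance : Group (Subgroup.center G)) with
    mul_comm := fun a b => Subtype.ext (Subgroup.mem_center_iff.1 b.2 a.1) }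

noncomputable def coxBeta : (CoxK cs →₀ ℤ) →+
    Additive (Subgroup.center (EnvelGroup (CoxeterQuandle cs))) :=
  Finsupp.liftAddHom (M := ℤ) (N := Additive (Subgroup.center (EnvelGroup (CoxeterQuandle cs))))
    fun k => zmultiplesHom _ (Additive.ofMul (coxCls cs k))

noncomputable def coxC : Subgroup (EnvelGroup (CoxeterQuandle cs)) :=
  ((Subgroup.center _).subtype.comp (AddMonoidHom.toMultiplicativeLeft (coxBeta cs))).range

instance coxC_normal : (coxC cs).Normal := by
  constructor
  rintro _ ⟨f, rfl⟩ g
  refine ⟨f, ?_⟩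
  set c := (AddMonoidHom.toMultiplicativeLeft (coxBeta cs)) f with hc
  have := Subgroup.mem_center_iff.1 c.2 g
  show c.1 = g * c.1 * g⁻¹
  rw [this]; group

noncomputable def coxAb : EnvelGroup (CoxeterQuandle cs) →* Multiplicative (CoxK cs →₀ ℤ) :=
  Rack.toEnvelGroup.map
    { toFun := fun x => (Multiplicative.ofAdd (Finsupp.single (coxK cs x) 1) :
        Multiplicative (CoxK cs →₀ ℤ))
      map_act' := by
        intro x y
        rw [Quandle.conj_act_eq_conj]
        have : coxK cs (x ◃ y) = coxK cs y := by
          apply Subtype.ext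
          show ConjClasses.mk (x ◃ y).1 = ConjClasses.mk y.1
          rw [ConjClasses.mk_eq_mk_iff_isConj]
          exact (isConj_iff.2 ⟨x.1, rfl⟩).symm
        rw [this]
        exact (mul_inv_cancel_comm (G := Multiplicative (CoxK cs →₀ ℤ)) _ _).symm }

theorem coxAb_coxE (x : CoxeterQuandle cs) : coxAb cs (coxE cs x) =
    Multiplicative.ofAdd (Finsupp.single (coxK cs x) 1) := rfl

end

theorem dihedral_pow {K : Type*} [Group K] (a b : K) (m : ℕ)
    (ha : a * a = 1) (hb : b * b = 1)
    (he : ∀ k, m = 2 * k → (a * b) ^ k * b * ((a * b) ^ k)⁻¹ = b)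
    (ho : ∀ k, m = 2 * k + 1 → (a * b) ^ k * a * ((a * b) ^ k)⁻¹ = b) :
    (a * b) ^ m = 1 := by
  have ha' : a⁻¹ = a := inv_eq_of_mul_eq_one_left ha
  have hb' : b⁻¹ = b := inv_eq_of_mul_eq_one_left hb
  have hinv : (a * b)⁻¹ = b * (a * b) * b⁻¹ := by
    rw [mul_inv_rev, ha', hb', ← mul_assoc, mul_assoc _ b b, hb, mul_one]
  have hinvk (k : ℕ) : ((a * b) ^ k)⁻¹ = b * (a * b) ^ k * b⁻¹ := by
    rw [← inv_pow, hinv, conj_pow]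
  rcases Nat.even_or_odd' m with ⟨k, hk | hk⟩
  · have h := he k hk
    rw [hk, two_mul, pow_add, ← eq_inv_iff_mul_eq_one, hinvk]
    rw [eq_mul_inv_iff_mul_eq]
    exact mul_inv_eq_iff_eq_mul.1 h
  · have h := mul_inv_eq_iff_eq_mul.1 (ho k hk)
    rw [hk, two_mul, pow_succ, pow_add]
    calc (a * b) ^ k * (a * b) ^ k * (a * b) = (a * b) ^ k * ((a * b) ^ k * a) * b := by group
      _ = (a * b) ^ k * (b * (a * b) ^ k * b⁻¹) := by rw [h, hb']; group
      _ = 1 := by rw [← hinvk]; group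

theorem dihedral_even {K : Type*} [Group K] (a b : K) (k : ℕ)
    (ha : a * a = 1) (hb : b * b = 1) (h : (a * b) ^ (2 * k) = 1) :
    (a * b) ^ k * b * ((a * b) ^ k)⁻¹ = b := by
  have ha' : a⁻¹ = a := inv_eq_of_mul_eq_one_left ha
  have hb' : b⁻¹ = b := inv_eq_of_mul_eq_one_left hb
  have hinv : (a * b)⁻¹ = b * (a * b) * b⁻¹ := by
    rw [mul_inv_rev, ha', hb', ← mul_assoc, mul_assoc _ b b, hb, mul_one]
  rw [← inv_pow, hinv, conj_pow]
  rw [two_mul, pow_add] at h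
  calc _ = (a * b) ^ k * (b * b) * (a * b) ^ k * b⁻¹ := by group
    _ = _ := by rw [hb, mul_one, h, one_mul, hb']

theorem dihedral_odd {K : Type*} [Group K] (a b : K) (k : ℕ)
    (ha : a * a = 1) (hb : b * b = 1) (h : (a * b) ^ (2 * k + 1) = 1) :
    (a * b) ^ k * a * ((a * b) ^ k)⁻¹ = b := by
  have ha' : a⁻¹ = a := inv_eq_of_mul_eq_one_left ha
  have hb' : b⁻¹ = b := inv_eq_of_mul_eq_one_left hb
  have hinv : (a * b)⁻¹ = a⁻¹ * (a * b) * a := by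
    rw [mul_inv_rev, ha', hb', ← mul_assoc, ha, one_mul]
  have hinvk : ((a * b) ^ k)⁻¹ = a⁻¹ * (a * b) ^ k * a := by
    rw [← inv_pow, hinv]
    have := conj_pow (a := a⁻¹) (b := a * b) (i := k)
    rwa [inv_inv] at this
  rw [hinvk]
  rw [two_mul, pow_succ, pow_add] at h
  calc _ = ((a * b) ^ k * (a * b) ^ k * (a * b)) * (b⁻¹ * a⁻¹) * a := by group
    _ = _ := by rw [h, hb']; group

theorem coxC_ker (cs : CoxeterSystem M W) (φ : EnvelGroup (CoxeterQuandle cs) →* W)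
    (hφ : ∀ x : CoxeterQuandle cs, φ (coxE cs x) = x.1) (hs : Function.Surjective φ)
    (g) (hg : φ g = 1) : g ∈ coxC cs := by
  have hsq (x) : coxE cs x ^ 2 ∈ coxC cs := by
    refine ⟨Multiplicative.ofAdd (Finsupp.single (coxK cs x) 1), ?_⟩
    rw [← coxCls_mk cs φ hφ hs]
    simp [coxBeta]
  let q := QuotientGroup.mk' (coxC cs)
  let e : B → EnvelGroup (CoxeterQuandle cs) := fun i =>
    coxE cs ⟨cs.simple i, cs.isReflection_simple i⟩
  have hq (x) : q (coxE cs x) * q (coxE cs x) = 1 := by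
    rw [← map_mul, ← pow_two]
    exact (QuotientGroup.eq_one_iff _).2 (hsq x)
  have hlift : M.IsLiftable (fun i => q (e i)) := by
    intro i j
    have hab : φ (e i * e j) = cs.simple i * cs.simple j := by
      rw [map_mul]
      exact congrArg₂ _ (hφ _) (hφ _)
    apply dihedral_pow
    · exact hq _
    · exact hq _
    · intro k hk
      simp only [← map_mul, ← map_pow, ← map_inv]
      congr 1
      refine (coxE_conj_mem cs φ hφ _ _).trans ?_
      refine congrArg (coxE cs) ?_
      apply Subtype.ext
      simp only [map_pow, hab]
      apply dihedral_even _ _ _ (cs.simple_mul_simple_self i) (cs.simple_mul_simple_self j)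
      rw [← hk]; exact cs.simple_mul_simple_pow i j
    · intro k hk
      simp only [← map_mul, ← map_pow, ← map_inv]
      congr 1
      refine (coxE_conj_mem cs φ hφ _ _).trans ?_
      refine congrArg (coxE cs) ?_
      apply Subtype.ext
      simp only [map_pow, hab]
      apply dihedral_odd _ _ _ (cs.simple_mul_simple_self i) (cs.simple_mul_simple_self j)
      rw [← hk]; exact cs.simple_mul_simple_pow i j
  let ψ := cs.lift ⟨_, hlift⟩
  have hψ (i) : ψ (cs.simple i) = q (e i) := cs.lift_apply_simple hlift i
  have hw (w : W) : ∃ g, φ g = w ∧ ψ w = q g := by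
    induction w using cs.simple_induction with
    | simple i => exact ⟨e i, hφ _, hψ i⟩
    | one => exact ⟨1, by simp, by simp⟩
    | mul w w' h h' =>
      obtain ⟨g, rfl, h⟩ := h
      obtain ⟨g', rfl, h'⟩ := h'
      exact ⟨g * g', by simp, by simp [h, h']⟩
  have hcomp : ψ.comp φ = q := by
    apply coxE_ext
    intro x
    obtain ⟨w, i, hx⟩ := x.2
    obtain ⟨g, rfl, h⟩ := hw w
    have : x = ⟨φ g * cs.simple i * (φ g)⁻¹, (cs.isReflection_simple i).conj _⟩ :=
      Subtype.ext hx
    rw [MonoidHom.comp_apply, hφ, hx, map_mul, map_mul, map_inv, h, hψ, this,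
      ← coxE_conj_mem cs φ hφ g ⟨cs.simple i, cs.isReflection_simple i⟩, map_mul, map_mul, map_inv]
  have := DFunLike.congr_fun hcomp g
  rw [MonoidHom.comp_apply, hg, map_one] at this
  exact (QuotientGroup.eq_one_iff _).1 this.symm

theorem coxC_ab (cs : CoxeterSystem M W) (g) (hg : g ∈ coxC cs) (h : coxAb cs g = 1) : g = 1 := by
  obtain ⟨f, rfl⟩ := hg
  let F : (CoxK cs →₀ ℤ) →+ (CoxK cs →₀ ℤ) := MonoidHom.toAdditive
    ((coxAb cs).comp ((Subgroup.center _).subtype.comp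
      (AddMonoidHom.toMultiplicativeLeft (coxBeta cs))))
  have hF : F = AddMonoidHom.id _ + AddMonoidHom.id _ := by
    ext k : 2
    have h1 : F (Finsupp.single k 1) = (coxAb cs (coxCls cs k).1).toAdd := by
      show (coxAb cs ((coxBeta cs (Finsupp.single k 1)).toMul).1).toAdd = _
      simp [coxBeta]
    have h2 : F (Finsupp.single k 1) = Finsupp.single k 1 + Finsupp.single k 1 := by
      rw [h1]
      show (coxAb cs (coxE cs (coxRep cs k) ^ 2)).toAdd = _
      rw [map_pow, coxAb_coxE, coxK_rep, pow_two]
      rfl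
    exact h2
  have h3 : F f.toAdd = 0 := h
  rw [hF] at h3
  have h4 : f.toAdd = 0 := by
    change f.toAdd + f.toAdd = 0 at h3
    ext k
    have := DFunLike.congr_fun h3 k
    simp only [Finsupp.add_apply, Finsupp.coe_zero, Pi.zero_apply] at this ⊢
    omega
  have h5 : f = 1 := h4
  rw [h5, map_one]

/-- The canonical surjection `φ : Ad(Q_W) → W`, `e_x ↦ x`, restricts to a group isomorphism
from the commutator subgroup `[Ad(Q_W), Ad(Q_W)]` onto `[W, W]`: it maps
`[Ad(Q_W), Ad(Q_W)]` onto `[W,W]` and is injective on `[Ad(Q_W), Ad(Q_W)]`. -/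
theorem stmt_16 (cs : CoxeterSystem M W)
    (φ : EnvelGroup (CoxeterQuandle cs) →* W)
    (hφ : ∀ x : CoxeterQuandle cs, φ (coxE cs x) = x.1) :
    Subgroup.map φ (commutator (EnvelGroup (CoxeterQuandle cs))) = commutator W ∧
    Set.InjOn φ (commutator (EnvelGroup (CoxeterQuandle cs)) : Set _) := by
  have hs : Function.Surjective φ := by
    intro w
    induction w using cs.simple_induction with
    | simple i => exact ⟨_, hφ ⟨cs.simple i, cs.isReflection_simple i⟩⟩
    | one => exact ⟨1, map_one _⟩
    | mul w w' h h' =>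
      obtain ⟨g, rfl⟩ := h
      obtain ⟨g', rfl⟩ := h'
      exact ⟨g * g', map_mul _ _ _⟩
  constructor
  · rw [commutator_def, commutator_def, Subgroup.map_commutator,
      Subgroup.map_top_of_surjective φ hs]
  · intro a ha b hb hab
    rw [← mul_inv_eq_one]
    have hm : a * b⁻¹ ∈ commutator (EnvelGroup (CoxeterQuandle cs)) :=
      mul_mem ha (inv_mem hb)
    apply coxC_ab cs
    · apply coxC_ker cs φ hφ hs
      rw [map_mul, map_inv, hab, mul_inv_cancel]
    · exact Abelianization.commutator_subset_ker (coxAb cs) hm
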